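/- Fix ρ ∈ (0,1) and α ∈ (0,1). Let (α_n) be a sequence in (0,1) with n·α_n → α, and let c_n be defined by Φ(−c_n) = α_n. Then n·c_n·∫_ℝ Φ(d(ρ,c_n,z))^{n−1}·φ(d(ρ,c_n,z))·φ(z) dz → 0 as n → ∞. -/

import Mathlib

open MeasureTheory Filter

/-- The standard normal density. -/
noncomputable def phi (x : ℝ) : ℝ := (Real.sqrt (2 * Real.pi))⁻¹ * Real.exp (-x ^ 2 / 2)

/-- The standard normal cumulative distribution function. -/
noncomputable def Phi (x : ℝ) : ℝ := ∫ t in Set.Iic x, phi t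

/-- d(ρ,c,z) = (c + √ρ·z)/√(1−ρ). -/
noncomputable def dd (ρ c z : ℝ) : ℝ := (c + Real.sqrt ρ * z) / Real.sqrt (1 - ρ)

/-- G(ρ,c,z) = (c + z/√ρ)/(2(1−ρ)^{3/2}). -/
noncomputable def G (ρ c z : ℝ) : ℝ :=
  (c + z / Real.sqrt ρ) / (2 * (1 - ρ) ^ ((3 : ℝ) / 2))

/-- H_n(ρ,c) = ∫ Φ(d(ρ,c,z))^n φ(z) dz. -/
noncomputable def Hn (n : ℕ) (ρ c : ℝ) : ℝ := ∫ z : ℝ, (Phi (dd ρ c z)) ^ n * phi z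

/-!
Completing the square gives `d² + z² = c² + w²` for `d = dd ρ c z = √(1 - ρ) c + √ρ w`, so the
integral equals `√(1 - ρ) φ(c) 𝔼[Φ(√(1 - ρ) c + √ρ W) ^ (n - 1)]` with `W` standard normal. Fix
`δ > 0` with `κ = √(1 - ρ) + √ρ δ < 1` and split at `W = δ c`: the expectation is at most
`Φ(κ c) ^ (n - 1) + Φ(-δ c)`. By Mills' ratio `φ(c)` is at most of order `c Φ(-c)`, which leaves
two terms.

* `n Φ(-c) · c² Φ(-δ c)` tends to zero, since `n Φ(-c)` is bounded and `Φ(-δ c)` has Gaussian decay.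
* `c² · n Φ(-c) Φ(κ c) ^ (n - 1)`: exactly one of `n` independent normals exceeds `κ c` with
  probability `n Φ(-κ c) Φ(κ c) ^ (n - 1) ≤ 1`, while `Φ(-c) ≤ exp (-κ (1 - κ) c²) Φ(-κ c)`.
-/

open Asymptotics ProbabilityTheory Set
open scoped Topology

theorem tendsto_sq_mul_exp_neg_mul_sq_atTop_nhds_zero {b : ℝ} (hb : 0 < b) :
    Tendsto (fun x : ℝ => x ^ 2 * Real.exp (-(b * x ^ 2))) atTop (𝓝 0) := by
  have h : Tendsto (fun y : ℝ => y * Real.exp (-(b * y))) atTop (𝓝 0) := by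
    simpa using tendsto_rpow_mul_exp_neg_mul_atTop_nhds_zero 1 b hb
  exact h.comp (tendsto_pow_atTop two_ne_zero)

theorem tendsto_zero_of_natCast_mul_isBigO_one {a : ℕ → ℝ}
    (h : (fun n : ℕ => n * a n) =O[atTop] fun _ => (1 : ℝ)) : Tendsto a atTop (𝓝 0) := by
  have hinv := ((isLittleO_one_iff ℝ).2 (tendsto_inv_atTop_nhds_zero_nat (𝕜 := ℝ))).mul_isBigO h
  refine (by simpa using hinv : Tendsto _ atTop (𝓝 (0 : ℝ))).congr' ?_
  filter_upwards [eventually_ne_atTop 0] with n hn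
  exact inv_mul_cancel_left₀ (Nat.cast_ne_zero.2 hn) (a n)

theorem phi_eq_gaussianPDFReal : phi = gaussianPDFReal 0 1 := by
  ext x
  simp [phi, gaussianPDFReal]

theorem phi_pos (x : ℝ) : 0 < phi x := by
  unfold phi
  positivity

theorem phi_neg (x : ℝ) : phi (-x) = phi x := by simp [phi]

theorem integrable_phi : Integrable phi :=
  phi_eq_gaussianPDFReal ▸ integrable_gaussianPDFReal 0 1

theorem integral_phi : ∫ x, phi x = 1 :=
  phi_eq_gaussianPDFReal ▸ integral_gaussianPDFReal_eq_one 0 one_ne_zero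

theorem phi_sub (x a : ℝ) : phi (x - a) = Real.exp (x * a - a ^ 2 / 2) * phi x := by
  unfold phi
  rw [mul_left_comm, ← Real.exp_add]
  ring_nf

theorem antitoneOn_phi : AntitoneOn phi (Ici 0) := fun x hx y _ hxy => by
  have : 0 ≤ x := hx
  unfold phi
  gcongr

theorem phi_mul_phi_eq_of_sq_add_sq_eq {x y u v : ℝ} (h : x ^ 2 + y ^ 2 = u ^ 2 + v ^ 2) :
    phi x * phi y = phi u * phi v := by
  unfold phi
  rw [mul_mul_mul_comm, mul_mul_mul_comm _ (Real.exp (-u ^ 2 / 2)), ← Real.exp_add, ← Real.exp_add]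
  congr 2
  linear_combination -h / 2

theorem Phi_eq_cdf (x : ℝ) : Phi x = cdf (gaussianReal 0 1) x := by
  rw [cdf_eq_real, measureReal_def, gaussianReal_apply_eq_integral _ one_ne_zero,
    ENNReal.toReal_ofReal (integral_nonneg (gaussianPDFReal_nonneg 0 1)), Phi,
    phi_eq_gaussianPDFReal]

theorem Phi_nonneg (x : ℝ) : 0 ≤ Phi x := Phi_eq_cdf x ▸ cdf_nonneg _ x

theorem Phi_le_one (x : ℝ) : Phi x ≤ 1 := Phi_eq_cdf x ▸ cdf_le_one _ x

theorem monotone_Phi : Monotone Phi := fun x y hxy => by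
  simpa only [Phi_eq_cdf] using monotone_cdf _ hxy

theorem Phi_pos (x : ℝ) : 0 < Phi x := by
  have hsupp : Function.support phi = univ := Function.support_eq_univ fun t => (phi_pos t).ne'
  rw [Phi, setIntegral_pos_iff_support_of_nonneg_ae (.of_forall fun t => (phi_pos t).le)
    integrable_phi.integrableOn]
  simp [hsupp]

theorem Phi_neg_eq_integral_Ioi (x : ℝ) : Phi (-x) = ∫ t in Ioi x, phi t := by
  simp only [Phi, ← integral_comp_neg_Ioi, phi_neg]

theorem Phi_add_Phi_neg (x : ℝ) : Phi x + Phi (-x) = 1 := by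
  rw [Phi_neg_eq_integral_Ioi, Phi, ← compl_Iic, ← integral_phi]
  exact integral_add_compl measurableSet_Iic integrable_phi

theorem Phi_sub_le {x a : ℝ} (ha : 0 ≤ a) : Phi (x - a) ≤ Real.exp (x * a) * Phi x := by
  have hshift : Phi (x - a) = ∫ t in Iic x, phi (t - a) := by
    have := (measurePreserving_sub_right (volume : Measure ℝ) a).setIntegral_preimage_emb
      (MeasurableEquiv.subRight a).measurableEmbedding phi (Iic (x - a))
    simpa [Phi] using this.symm
  rw [hshift, Phi, ← integral_const_mul]
  refine setIntegral_mono_on (integrable_phi.comp_sub_right a).integrableOn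
    (integrable_phi.const_mul _).integrableOn measurableSet_Iic fun t ht => ?_
  rw [phi_sub]
  have hta : t * a ≤ x * a := mul_le_mul_of_nonneg_right ht ha
  gcongr
  · exact (phi_pos t).le
  · linarith [sq_nonneg a]

theorem Phi_neg_le_exp {t : ℝ} (ht : 0 ≤ t) : Phi (-t) ≤ Real.exp (-(t ^ 2 / 4)) := by
  calc Phi (-t) = Phi (-(t / 2) - t / 2) := by ring_nf
    _ ≤ Real.exp (-(t / 2) * (t / 2)) * Phi (-(t / 2)) := Phi_sub_le (by positivity)
    _ ≤ Real.exp (-(t / 2) * (t / 2)) := mul_le_of_le_one_right (Real.exp_nonneg _) (Phi_le_one _)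
    _ = Real.exp (-(t ^ 2 / 4)) := by ring_nf

theorem mul_phi_add_le_Phi_neg {x t : ℝ} (hx : 0 ≤ x) (ht : 0 ≤ t) :
    t * phi (x + t) ≤ Phi (-x) := by
  calc t * phi (x + t) = volume.real (Ioc x (x + t)) • phi (x + t) := by simp [ht]
    _ ≤ ∫ u in Ioc x (x + t), phi u :=
      setIntegral_ge_of_const_le measurableSet_Ioc (by simp)
        (fun u hu => antitoneOn_phi (hx.trans hu.1.le) (add_nonneg hx ht) hu.2)
        integrable_phi.integrableOn
    _ ≤ ∫ u in Ioi x, phi u :=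
      setIntegral_mono_set integrable_phi.integrableOn (.of_forall fun u => (phi_pos u).le)
        Ioc_subset_Ioi_self.eventuallyLE
    _ = Phi (-x) := (Phi_neg_eq_integral_Ioi x).symm

theorem phi_le_mul_Phi_neg {x : ℝ} (hx : 1 ≤ x) : phi x ≤ Real.exp (3 / 2) * x * Phi (-x) := by
  have hx0 : 0 < x := by linarith
  have hinv : x⁻¹ ^ 2 ≤ 1 := pow_le_one₀ (by positivity) (inv_le_one_of_one_le₀ hx)
  have hshift : phi x ≤ Real.exp (3 / 2) * phi (x + x⁻¹) := by
    calc phi x = phi (x + x⁻¹ - x⁻¹) := by rw [add_sub_cancel_right]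
      _ = Real.exp ((x + x⁻¹) * x⁻¹ - x⁻¹ ^ 2 / 2) * phi (x + x⁻¹) := phi_sub _ _
      _ ≤ Real.exp (3 / 2) * phi (x + x⁻¹) := by
        gcongr
        · exact (phi_pos _).le
        · rw [add_mul, mul_inv_cancel₀ hx0.ne']
          linarith
  calc phi x ≤ Real.exp (3 / 2) * phi (x + x⁻¹) := hshift
    _ = Real.exp (3 / 2) * x * (x⁻¹ * phi (x + x⁻¹)) := by field_simp
    _ ≤ Real.exp (3 / 2) * x * Phi (-x) := by
      gcongr
      exact mul_phi_add_le_Phi_neg hx0.le (by positivity)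

theorem natCast_mul_Phi_pow_mul_Phi_neg_le_one (n : ℕ) (x : ℝ) :
    n * Phi x ^ (n - 1) * Phi (-x) ≤ 1 := by
  have hbernoulli := pow_add_mul_le_add_pow (Phi_nonneg x)
    (b := Phi (-x)) (by linarith [Phi_nonneg x, Phi_nonneg (-x)]) n
  rw [Phi_add_Phi_neg, one_pow] at hbernoulli
  linarith [pow_nonneg (Phi_nonneg x) n]

theorem natCast_mul_Phi_neg_mul_Phi_pow_le_exp (n : ℕ) {κ x : ℝ} (hκ : κ ≤ 1) (hx : 0 ≤ x) :
    n * Phi (-x) * Phi (κ * x) ^ (n - 1) ≤ Real.exp (-(κ * (1 - κ) * x ^ 2)) := by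
  have hshift : Phi (-x) ≤ Real.exp (-(κ * (1 - κ) * x ^ 2)) * Phi (-(κ * x)) := by
    convert Phi_sub_le (x := -(κ * x)) (mul_nonneg (sub_nonneg.2 hκ) hx) using 2 <;> ring_nf
  have hpow : 0 ≤ Phi (κ * x) ^ (n - 1) := pow_nonneg (Phi_nonneg _) _
  calc n * Phi (-x) * Phi (κ * x) ^ (n - 1)
      ≤ n * (Real.exp (-(κ * (1 - κ) * x ^ 2)) * Phi (-(κ * x))) * Phi (κ * x) ^ (n - 1) := by
        gcongr
    _ = Real.exp (-(κ * (1 - κ) * x ^ 2)) *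
        (n * Phi (κ * x) ^ (n - 1) * Phi (-(κ * x))) := by ring
    _ ≤ Real.exp (-(κ * (1 - κ) * x ^ 2)) :=
      mul_le_of_le_one_right (Real.exp_nonneg _) (natCast_mul_Phi_pow_mul_Phi_neg_le_one n _)

theorem tendsto_atTop_of_tendsto_Phi_neg {ι : Type*} {l : Filter ι} {c : ι → ℝ}
    (h : Tendsto (fun i => Phi (-(c i))) l (𝓝 0)) : Tendsto c l atTop := by
  refine tendsto_atTop.2 fun b => ?_
  filter_upwards [h.eventually_lt_const (Phi_pos (-b))] with i hi
  exact (neg_lt_neg_iff.1 (monotone_Phi.reflect_lt hi)).le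

theorem integral_mul_phi_le_of_monotone {g : ℝ → ℝ} (hg : Monotone g) (hg0 : ∀ w, 0 ≤ g w)
    (hg1 : ∀ w, g w ≤ 1) (t : ℝ) : ∫ w, g w * phi w ≤ g t + Phi (-t) := by
  have htail : Integrable ((Ioi t).indicator phi) := integrable_phi.indicator measurableSet_Ioi
  calc ∫ w, g w * phi w ≤ ∫ w, (g t * phi w + (Ioi t).indicator phi w) := by
        refine integral_mono_of_nonneg (.of_forall fun w => mul_nonneg (hg0 w) (phi_pos w).le)
          ((integrable_phi.const_mul _).add htail) (.of_forall fun w => ?_)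
        have hw := (phi_pos w).le
        rcases le_or_gt w t with hwt | htw
        · simpa [hwt] using mul_le_mul_of_nonneg_right (hg hwt) hw
        · simpa [htw] using (mul_le_of_le_one_left hw (hg1 w)).trans
            (le_add_of_nonneg_left (mul_nonneg (hg0 t) hw))
    _ = g t + Phi (-t) := by
        rw [integral_add (integrable_phi.const_mul _) htail, integral_const_mul, integral_phi,
          mul_one, integral_indicator measurableSet_Ioi, Phi_neg_eq_integral_Ioi]

section

variable {ρ : ℝ} (hρ : ρ ∈ Ico (0 : ℝ) 1)
include hρ

theorem dd_sqrt_one_sub_mul_sub (c w : ℝ) :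
    dd ρ c (√(1 - ρ) * w - √ρ * c) = √(1 - ρ) * c + √ρ * w := by
  have hs : 0 < √(1 - ρ) := Real.sqrt_pos.2 (sub_pos.2 hρ.2)
  rw [dd, div_eq_iff hs.ne']
  linear_combination -c * Real.sq_sqrt hρ.1 - c * Real.sq_sqrt (sub_pos.2 hρ.2).le

theorem integral_comp_dd_mul_phi_mul_phi (f : ℝ → ℝ) (c : ℝ) :
    ∫ z, f (dd ρ c z) * phi (dd ρ c z) * phi z =
      √(1 - ρ) * phi c * ∫ w, f (√(1 - ρ) * c + √ρ * w) * phi w := by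
  have hs : 0 < √(1 - ρ) := Real.sqrt_pos.2 (sub_pos.2 hρ.2)
  set F : ℝ → ℝ := fun z => f (dd ρ c z) * phi (dd ρ c z) * phi z with hF
  have hsubst : ∫ z, F z = √(1 - ρ) * ∫ w, F (√(1 - ρ) * w - √ρ * c) := by
    rw [Measure.integral_comp_mul_left (fun z => F (z - √ρ * c)), integral_sub_right_eq_self,
      abs_of_pos (inv_pos.2 hs), smul_eq_mul, mul_inv_cancel_left₀ hs.ne']
  have hsquare (w : ℝ) : F (√(1 - ρ) * w - √ρ * c) =
      phi c * (f (√(1 - ρ) * c + √ρ * w) * phi w) := by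
    have hrot : phi (√(1 - ρ) * c + √ρ * w) * phi (√(1 - ρ) * w - √ρ * c) = phi c * phi w := by
      refine phi_mul_phi_eq_of_sq_add_sq_eq ?_
      linear_combination (c ^ 2 + w ^ 2) *
        (Real.sq_sqrt hρ.1 + Real.sq_sqrt (sub_pos.2 hρ.2).le)
    rw [hF]
    dsimp only
    rw [dd_sqrt_one_sub_mul_sub hρ, mul_assoc, hrot, mul_left_comm]
  rw [hsubst, mul_assoc]
  simp only [hsquare, integral_const_mul]

theorem integral_Phi_dd_pow_le (c δ : ℝ) (m : ℕ) :
    ∫ z, Phi (dd ρ c z) ^ m * phi (dd ρ c z) * phi z ≤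
      √(1 - ρ) * phi c * (Phi ((√(1 - ρ) + √ρ * δ) * c) ^ m + Phi (-(δ * c))) := by
  have hmono : Monotone fun w => Phi (√(1 - ρ) * c + √ρ * w) ^ m := fun v w hvw =>
    pow_le_pow_left₀ (Phi_nonneg _) (monotone_Phi (by gcongr)) m
  have hsplit := integral_mul_phi_le_of_monotone hmono (fun w => pow_nonneg (Phi_nonneg _) m)
    (fun w => pow_le_one₀ (Phi_nonneg _) (Phi_le_one _)) (δ * c)
  rw [integral_comp_dd_mul_phi_mul_phi hρ (fun x => Phi x ^ m)]
  have := (phi_pos c).le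
  gcongr
  exact hsplit.trans_eq (by ring_nf)

theorem natCast_mul_integral_Phi_dd_pow_le (n : ℕ) {c δ κ : ℝ} (hc : 1 ≤ c) (hδ : 0 ≤ δ)
    (hκ : √(1 - ρ) + √ρ * δ = κ) (hκ1 : κ ≤ 1) :
    n * c * ∫ z, Phi (dd ρ c z) ^ (n - 1) * phi (dd ρ c z) * phi z ≤
      √(1 - ρ) * Real.exp (3 / 2) * (c ^ 2 * Real.exp (-(κ * (1 - κ) * c ^ 2)) +
        n * Phi (-c) * (c ^ 2 * Real.exp (-(δ ^ 2 / 4 * c ^ 2)))) := by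
  have hc0 : 0 ≤ c := by linarith
  have hhead := natCast_mul_Phi_neg_mul_Phi_pow_le_exp n hκ1 hc0
  have htail : Phi (-(δ * c)) ≤ Real.exp (-(δ ^ 2 / 4 * c ^ 2)) :=
    (Phi_neg_le_exp (mul_nonneg hδ hc0)).trans_eq (by ring_nf)
  have hP := Phi_nonneg (κ * c)
  have hT := Phi_nonneg (-(δ * c))
  have hΦ := Phi_nonneg (-c)
  calc n * c * ∫ z, Phi (dd ρ c z) ^ (n - 1) * phi (dd ρ c z) * phi z
      ≤ n * c * (√(1 - ρ) * phi c * (Phi (κ * c) ^ (n - 1) + Phi (-(δ * c)))) := by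
        gcongr
        exact hκ ▸ integral_Phi_dd_pow_le hρ c δ (n - 1)
    _ ≤ n * c * (√(1 - ρ) * (Real.exp (3 / 2) * c * Phi (-c)) *
          (Phi (κ * c) ^ (n - 1) + Phi (-(δ * c)))) := by
        gcongr
        exact phi_le_mul_Phi_neg hc
    _ = √(1 - ρ) * Real.exp (3 / 2) * (c ^ 2 * (n * Phi (-c) * Phi (κ * c) ^ (n - 1)) +
          n * Phi (-c) * (c ^ 2 * Phi (-(δ * c)))) := by ring
    _ ≤ _ := by gcongr

end

theorem exists_pos_sqrt_one_sub_add_sqrt_mul_lt_one {x : ℝ} (hx : 0 < x) :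
    ∃ δ > 0, √(1 - x) + √x * δ < 1 := by
  have hs : √(1 - x) < 1 := (Real.sqrt_lt' one_pos).2 (by linarith)
  obtain ⟨κ, hsκ, hκ1⟩ := exists_between hs
  have hx' : 0 < √x := Real.sqrt_pos.2 hx
  refine ⟨(κ - √(1 - x)) / √x, div_pos (sub_pos.2 hsκ) hx', ?_⟩
  rwa [mul_div_cancel₀ _ hx'.ne', add_sub_cancel]

theorem third_term_tendsto_zero_general {ρ : ℝ} (hρ : ρ ∈ Ioo (0 : ℝ) 1) {c : ℕ → ℝ}
    (hbdd : (fun n : ℕ => n * Phi (-(c n))) =O[atTop] fun _ => (1 : ℝ)) :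
    Tendsto (fun n : ℕ =>
        n * c n * ∫ z, Phi (dd ρ (c n) z) ^ (n - 1) * phi (dd ρ (c n) z) * phi z)
      atTop (𝓝 0) := by
  have hc := tendsto_atTop_of_tendsto_Phi_neg (tendsto_zero_of_natCast_mul_isBigO_one hbdd)
  obtain ⟨δ, hδ, hκ1⟩ := exists_pos_sqrt_one_sub_add_sqrt_mul_lt_one hρ.1
  set κ := √(1 - ρ) + √ρ * δ with hκ
  have hκ0 : 0 < κ := add_pos_of_nonneg_of_pos (Real.sqrt_nonneg _)
    (mul_pos (Real.sqrt_pos.2 hρ.1) hδ)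
  have hdecay {b : ℝ} (hb : 0 < b) :
      Tendsto (fun n => c n ^ 2 * Real.exp (-(b * c n ^ 2))) atTop (𝓝 0) :=
    (tendsto_sq_mul_exp_neg_mul_sq_atTop_nhds_zero hb).comp hc
  have hhead := hdecay (mul_pos hκ0 (sub_pos.2 hκ1))
  have htail := hbdd.mul_isLittleO <|
    (isLittleO_one_iff ℝ).2 (hdecay (by positivity : 0 < δ ^ 2 / 4))
  rw [mul_one, isLittleO_one_iff] at htail
  have hbound := (hhead.add htail).const_mul (√(1 - ρ) * Real.exp (3 / 2))
  rw [add_zero, mul_zero] at hbound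
  refine squeeze_zero' ?_ ?_ hbound
  · filter_upwards [hc.eventually_ge_atTop 0] with n hn
    exact mul_nonneg (by positivity) (integral_nonneg fun z => mul_nonneg
      (mul_nonneg (pow_nonneg (Phi_nonneg _) _) (phi_pos _).le) (phi_pos z).le)
  · filter_upwards [hc.eventually_ge_atTop 1] with n hn
    exact natCast_mul_integral_Phi_dd_pow_le (Ioo_subset_Ico_self hρ) n hn hδ.le hκ.symm hκ1.le

theorem third_term_tendsto_zero
    (ρ : ℝ) (hρ : ρ ∈ Set.Ioo (0:ℝ) 1) (α : ℝ) (hα : α ∈ Set.Ioo (0:ℝ) 1)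
    (αseq : ℕ → ℝ) (hαseq : ∀ n, αseq n ∈ Set.Ioo (0:ℝ) 1)
    (hlim : Tendsto (fun n : ℕ => (n : ℝ) * αseq n) atTop (nhds α))
    (c : ℕ → ℝ) (hc : ∀ n, Phi (-(c n)) = αseq n) :
    Tendsto (fun n : ℕ =>
        (n : ℝ) * c n *
          ∫ z : ℝ, (Phi (dd ρ (c n) z)) ^ (n - 1) * phi (dd ρ (c n) z) * phi z)
      atTop (nhds 0) :=
  third_term_tendsto_zero_general hρ (by simpa only [hc] using hlim.isBigO_one ℝ)
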